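/- For each fixed n ∈ {0,…,29}, the eight vectors Aₙ, Bₙ, Cₙ, Dₙ, Eₙ, Fₙ, Gₙ, Hₙ form a system of simple roots with Dynkin diagram E₈: each has ⟨X,X⟩_ℝ = 1; the pairs {Aₙ,Fₙ}, {Aₙ,Cₙ}, {Aₙ,Bₙ}, {Cₙ,Dₙ}, {Bₙ,Eₙ}, {Eₙ,Gₙ}, {Gₙ,Hₙ} each have ⟨X,Y⟩_ℝ = −1/2; and every other pair of distinct vectors among them has ⟨X,Y⟩_ℝ = 0. Thus the Gram matrix of (Fₙ, Aₙ, Cₙ, Dₙ, Bₙ, Eₙ, Gₙ, Hₙ) is one half of a Cartan matrix of type E₈. -/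

import Mathlib

noncomputable section
open Real Complex

namespace Triacontagonal

/-- The golden ratio. -/
def τ : ℝ := (1 + Real.sqrt 5) / 2

/-- The constant 3^(-1/2) * 5^(-1/4). -/
def k0 : ℝ := (3 : ℝ) ^ (-(1:ℝ)/2) * (5 : ℝ) ^ (-(1:ℝ)/4)

/-- `a` is the positive real with 2a² = 1 + 3^(-1/2)·5^(-1/4)·τ^(3/2). -/
def a : ℝ := Real.sqrt ((1 + k0 * τ ^ ((3:ℝ)/2)) / 2)

/-- `b` is the positive real with 2b² = 1 + 3^(-1/2)·5^(-1/4)·τ^(-3/2). -/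
def b : ℝ := Real.sqrt ((1 + k0 * τ ^ (-((3:ℝ)/2))) / 2)

/-- `c` is the positive real with 2c² = 1 - 3^(-1/2)·5^(-1/4)·τ^(-3/2). -/
def c : ℝ := Real.sqrt ((1 - k0 * τ ^ (-((3:ℝ)/2))) / 2)

/-- `d` is the positive real with 2d² = 1 - 3^(-1/2)·5^(-1/4)·τ^(3/2). -/
def d : ℝ := Real.sqrt ((1 - k0 * τ ^ ((3:ℝ)/2)) / 2)

/-- `cc n = 2 cos(nπ/30)`. -/
def cc (n : ℤ) : ℝ := 2 * Real.cos (n * Real.pi / 30)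

/-- `ω = exp(iπ/30)`, a primitive 60th root of unity. -/
def ω : ℂ := Complex.exp (Real.pi * Complex.I / 30)

def r1 : ℝ := a / cc 9
def r2 : ℝ := b / cc 9
def r3 : ℝ := c / cc 9
def r4 : ℝ := d / cc 9
def r5 : ℝ := a / cc 3
def r6 : ℝ := b / cc 3
def r7 : ℝ := c / cc 3
def r8 : ℝ := d / cc 3

/-- The eight cycles of 30 vectors each in ℂ⁴. -/
def A (n : Fin 30) : Fin 4 → ℂ :=
  ![(r1 : ℂ) * ω ^ (2 * (n : ℕ)), (r4 : ℂ) * ω ^ (22 * (n : ℕ)),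
    (r6 : ℂ) * ω ^ (14 * (n : ℕ) + 1), (r7 : ℂ) * ω ^ (26 * (n : ℕ) + 1)]

def B (n : Fin 30) : Fin 4 → ℂ :=
  ![(r2 : ℂ) * ω ^ (2 * (n : ℕ) + 29), (r3 : ℂ) * ω ^ (22 * (n : ℕ) + 19),
    -((r8 : ℂ) * ω ^ (14 * (n : ℕ) + 24)), -((r5 : ℂ) * ω ^ (26 * (n : ℕ) + 18))]

def C (n : Fin 30) : Fin 4 → ℂ :=
  ![(r3 : ℂ) * ω ^ (2 * (n : ℕ) + 29), -((r2 : ℂ) * ω ^ (22 * (n : ℕ) + 19)),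
    (r5 : ℂ) * ω ^ (14 * (n : ℕ) + 24), -((r8 : ℂ) * ω ^ (26 * (n : ℕ) + 18))]

def D (n : Fin 30) : Fin 4 → ℂ :=
  ![(r4 : ℂ) * ω ^ (2 * (n : ℕ)), -((r1 : ℂ) * ω ^ (22 * (n : ℕ))),
    (r7 : ℂ) * ω ^ (14 * (n : ℕ) + 1), -((r6 : ℂ) * ω ^ (26 * (n : ℕ) + 1))]

def E (n : Fin 30) : Fin 4 → ℂ :=
  ![(r5 : ℂ) * ω ^ (2 * (n : ℕ)), (r8 : ℂ) * ω ^ (22 * (n : ℕ)),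
    -((r2 : ℂ) * ω ^ (14 * (n : ℕ) + 1)), -((r3 : ℂ) * ω ^ (26 * (n : ℕ) + 1))]

def F (n : Fin 30) : Fin 4 → ℂ :=
  ![(r6 : ℂ) * ω ^ (2 * (n : ℕ) + 29), (r7 : ℂ) * ω ^ (22 * (n : ℕ) + 19),
    (r4 : ℂ) * ω ^ (14 * (n : ℕ) + 24), (r1 : ℂ) * ω ^ (26 * (n : ℕ) + 18)]

def G (n : Fin 30) : Fin 4 → ℂ :=
  ![(r7 : ℂ) * ω ^ (2 * (n : ℕ) + 29), -((r6 : ℂ) * ω ^ (22 * (n : ℕ) + 19)),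
    -((r1 : ℂ) * ω ^ (14 * (n : ℕ) + 24)), (r4 : ℂ) * ω ^ (26 * (n : ℕ) + 18)]

def H (n : Fin 30) : Fin 4 → ℂ :=
  ![(r8 : ℂ) * ω ^ (2 * (n : ℕ)), -((r5 : ℂ) * ω ^ (22 * (n : ℕ))),
    -((r3 : ℂ) * ω ^ (14 * (n : ℕ) + 1)), (r2 : ℂ) * ω ^ (26 * (n : ℕ) + 1)]

/-- The set of the 240 vectors. -/
def S : Set (Fin 4 → ℂ) :=
  {v | ∃ n : Fin 30, v = A n ∨ v = B n ∨ v = C n ∨ v = D n ∨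
    v = E n ∨ v = F n ∨ v = G n ∨ v = H n}

/-- The real inner product on ℂ⁴: ⟨v,w⟩_ℝ = Re(Σᵢ vᵢ · conj(wᵢ)). -/
def rinner (v w : Fin 4 → ℂ) : ℝ := (∑ i, v i * star (w i)).re

/-- The associated Euclidean norm. -/
def enorm (v : Fin 4 → ℂ) : ℝ := Real.sqrt (rinner v v)

/-- The Gram matrix of the ordered tuple (Fₙ, Aₙ, Cₙ, Dₙ, Bₙ, Eₙ, Gₙ, Hₙ):
half of a Cartan matrix of type E₈. -/
def G8 : Matrix (Fin 8) (Fin 8) ℝ :=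
  !![1, -(1/2), 0, 0, 0, 0, 0, 0;
     -(1/2), 1, -(1/2), 0, -(1/2), 0, 0, 0;
     0, -(1/2), 1, -(1/2), 0, 0, 0, 0;
     0, 0, -(1/2), 1, 0, 0, 0, 0;
     0, -(1/2), 0, 0, 1, -(1/2), 0, 0;
     0, 0, 0, 0, -(1/2), 1, -(1/2), 0;
     0, 0, 0, 0, 0, -(1/2), 1, -(1/2);
     0, 0, 0, 0, 0, 0, -(1/2), 1]

/-- The ordered system of simple roots (Fₙ, Aₙ, Cₙ, Dₙ, Bₙ, Eₙ, Gₙ, Hₙ). -/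
def simple (n : Fin 30) : Fin 8 → (Fin 4 → ℂ) :=
  ![F n, A n, C n, D n, B n, E n, G n, H n]

/-!
The `E₈` diagram is bipartite. The white nodes `F, C, B, G` share their phases, and so do the black
nodes `A, D, E, H`; within each class the phases therefore cancel, and the four vectors are
orthonormal because `a² + d² = b² + c² = 1` and `c₉⁻² + c₃⁻² = 1`.

The phases of the two classes differ by `29, 19, 23, 17`, which are `30` minus the exponents
`1, 11, 7, 13` of `E₈`. Hence the mixed inner products form the matrix
`-½ W diag(c₁, c₁₁, c₇, c₁₃) Bᵀ`, where `W` and `B` are the real coordinate matrices of the two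
classes. Put `a = cos α`, `d = sin α`, `b = cos β`, `c = sin β`. The quantities `ab + cd`,
`ab - cd`, `ac + bd`, `ac - bd` are the cosines and sines of `β ∓ α`, with values `τ/√3`, `1/c₃`,
`1/c₉`, `1/(τ√3)`, while `c₁ ± c₁₁` are `√3 τ`, `c₉` and `c₇ ± c₁₃` are `c₃`, `√3/τ`. So every
combination such as `ab c₁ + cd c₁₁` that occurs in the matrix product is `0`, `1`, `τ` or `τ⁻¹`.
-/

open scoped Matrix

lemma τ_sq : τ ^ 2 = τ + 1 := Real.goldenRatio_sq

lemma one_lt_τ : 1 < τ := Real.one_lt_goldenRatio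

lemma τ_pos : 0 < τ := Real.goldenRatio_pos

lemma inv_τ : τ⁻¹ = τ - 1 :=
  inv_eq_of_mul_eq_one_right (by linear_combination τ_sq)

lemma sqrt_five_eq : √5 = 2 * τ - 1 := by
  unfold τ
  ring

lemma sqrt_three_sq : √3 ^ 2 = 3 := Real.sq_sqrt (by norm_num)

lemma cc_mul (m n : ℤ) : cc m * cc n = cc (m + n) + cc (m - n) := by
  unfold cc
  push_cast
  rw [add_mul, sub_mul, add_div, sub_div, Real.cos_add, Real.cos_sub]
  ring

lemma cc_thirty_sub (n : ℤ) : cc (30 - n) = -cc n := by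
  unfold cc
  push_cast
  rw [show (30 - n) * π / 30 = π - n * π / 30 by ring, Real.cos_pi_sub]
  ring

lemma cc_zero : cc 0 = 2 := by simp [cc]

lemma cc_five : cc 5 = √3 := by
  rw [cc, show ((5 : ℤ) : ℝ) * π / 30 = π / 6 by push_cast; ring, Real.cos_pi_div_six]
  ring

lemma cc_six : cc 6 = τ := by
  rw [cc, show ((6 : ℤ) : ℝ) * π / 30 = π / 5 by push_cast; ring, Real.cos_pi_div_five, τ]
  ring

lemma cc_ten : cc 10 = 1 := by
  rw [cc, show ((10 : ℤ) : ℝ) * π / 30 = π / 3 by push_cast; ring, Real.cos_pi_div_three]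
  ring

lemma cc_twelve : cc 12 = τ - 1 := by
  have h := cc_mul 6 6
  norm_num [cc_six, cc_zero] at h
  linear_combination τ_sq - h

lemma cc_three_pos : 0 < cc 3 := by
  have : 0 < Real.cos ((3 : ℤ) * π / 30) :=
    Real.cos_pos_of_mem_Ioo ⟨by push_cast; linarith [pi_pos], by push_cast; linarith [pi_pos]⟩
  unfold cc
  positivity

lemma cc_three_sq : cc 3 ^ 2 = τ + 2 := by
  have h := cc_mul 3 3
  norm_num [cc_six, cc_zero] at h
  linear_combination h

lemma cc_nine_eq : cc 9 = (τ - 1) * cc 3 := by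
  have h := cc_mul 6 3
  norm_num [cc_six] at h
  linear_combination -h

lemma cc_three_eq : cc 3 = τ * cc 9 := by
  linear_combination -τ * cc_nine_eq - cc 3 * τ_sq

lemma cc_nine_pos : 0 < cc 9 := by
  rw [cc_nine_eq]
  exact mul_pos (sub_pos.2 one_lt_τ) cc_three_pos

lemma inv_cc_nine : (cc 9)⁻¹ = τ * (cc 3)⁻¹ := by
  have h := cc_nine_pos.ne'
  have hτ := τ_pos.ne'
  rw [cc_three_eq]
  field_simp

lemma inv_cc_three_sq_mul : (cc 3)⁻¹ ^ 2 * (τ + 2) = 1 := by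
  rw [← cc_three_sq, ← mul_pow, inv_mul_cancel₀ cc_three_pos.ne', one_pow]

lemma cc_one_add_cc_eleven : cc 1 + cc 11 = √3 * τ := by
  have h := cc_mul 6 5
  norm_num [cc_six, cc_five] at h
  linear_combination -h

lemma cc_one_sub_cc_eleven : cc 1 - cc 11 = cc 9 := by
  have h := cc_mul 10 9
  have h11 := cc_thirty_sub 11
  norm_num [cc_ten] at h h11
  linear_combination -h - h11

lemma cc_seven_add_cc_thirteen : cc 7 + cc 13 = cc 3 := by
  have h := cc_mul 10 3
  norm_num [cc_ten] at h
  linear_combination -h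

lemma cc_seven_sub_cc_thirteen : cc 7 - cc 13 = √3 * (τ - 1) := by
  have h := cc_mul 12 5
  have h13 := cc_thirty_sub 13
  norm_num [cc_twelve, cc_five] at h h13
  linear_combination -h - h13

/-- `ξ = cos 2α`, where `a = cos α` and `d = sin α`. -/
def ξ : ℝ := k0 * τ ^ ((3 : ℝ) / 2)

/-- `η = cos 2β`, where `b = cos β` and `c = sin β`. -/
def η : ℝ := k0 * τ ^ (-((3 : ℝ) / 2))

lemma k0_pos : 0 < k0 := by
  unfold k0
  positivity

lemma k0_sq : k0 ^ 2 = (2 * τ - 1) / 15 := by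
  have h3 : ((3 : ℝ) ^ (-(1 : ℝ) / 2)) ^ 2 = 1 / 3 := by
    rw [← Real.rpow_mul_natCast (by norm_num)]
    norm_num
  have h5 : ((5 : ℝ) ^ (-(1 : ℝ) / 4)) ^ 2 = (√5)⁻¹ := by
    rw [← Real.rpow_mul_natCast (by norm_num), Real.sqrt_eq_rpow, ← Real.rpow_neg (by norm_num)]
    norm_num
  have h : √5 ≠ 0 := by positivity
  rw [k0, mul_pow, h3, h5, ← sqrt_five_eq]
  field_simp
  norm_num

lemma ξ_mul_η : ξ * η = k0 ^ 2 := by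
  have h := (Real.rpow_pos_of_pos τ_pos ((3 : ℝ) / 2)).ne'
  rw [ξ, η, Real.rpow_neg τ_pos.le]
  field_simp

lemma ξ_sq_add_η_sq : ξ ^ 2 + η ^ 2 = 2 / 3 := by
  have hξ : (τ ^ ((3 : ℝ) / 2)) ^ 2 = τ ^ 3 := by
    rw [← Real.rpow_mul_natCast τ_pos.le, ← Real.rpow_natCast]
    norm_num
  rw [ξ, η, Real.rpow_neg τ_pos.le, mul_pow, mul_pow, inv_pow, hξ, ← inv_pow, inv_τ, k0_sq]
  linear_combination (4 * τ ^ 2 - 4 * τ + 9) / 15 * τ_sq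

lemma η_pos : 0 < η := mul_pos k0_pos (Real.rpow_pos_of_pos τ_pos _)

lemma η_le_ξ : η ≤ ξ :=
  mul_le_mul_of_nonneg_left (Real.rpow_le_rpow_of_exponent_le one_lt_τ.le (by norm_num)) k0_pos.le

lemma ξ_lt_one : ξ < 1 := by nlinarith [ξ_sq_add_η_sq, sq_nonneg η]

lemma a_eq : a = √((1 + ξ) / 2) := rfl

lemma b_eq : b = √((1 + η) / 2) := rfl

lemma c_eq : c = √((1 - η) / 2) := rfl

lemma d_eq : d = √((1 - ξ) / 2) := rfl

lemma a_sq : a ^ 2 = (1 + ξ) / 2 := by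
  rw [a_eq, Real.sq_sqrt (by linarith [η_pos, η_le_ξ])]

lemma b_sq : b ^ 2 = (1 + η) / 2 := by
  rw [b_eq, Real.sq_sqrt (by linarith [η_pos])]

lemma c_sq : c ^ 2 = (1 - η) / 2 := by
  rw [c_eq, Real.sq_sqrt (by linarith [η_le_ξ, ξ_lt_one])]

lemma d_sq : d ^ 2 = (1 - ξ) / 2 := by
  rw [d_eq, Real.sq_sqrt (by linarith [ξ_lt_one])]

lemma a_sq_add_d_sq : a ^ 2 + d ^ 2 = 1 := by
  rw [a_sq, d_sq]
  ring

lemma b_sq_add_c_sq : b ^ 2 + c ^ 2 = 1 := by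
  rw [b_sq, c_sq]
  ring

lemma a_nonneg : 0 ≤ a := Real.sqrt_nonneg _

lemma b_nonneg : 0 ≤ b := Real.sqrt_nonneg _

lemma c_nonneg : 0 ≤ c := Real.sqrt_nonneg _

lemma d_nonneg : 0 ≤ d := Real.sqrt_nonneg _

lemma b_le_a : b ≤ a := by
  rw [a_eq, b_eq]
  gcongr
  exact η_le_ξ

lemma c_le_b : c ≤ b := by
  rw [b_eq, c_eq]
  exact Real.sqrt_le_sqrt (by linarith [η_pos])

lemma d_le_c : d ≤ c := by
  rw [c_eq, d_eq]
  gcongr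
  exact η_le_ξ

lemma c_mul_d_le_a_mul_b : c * d ≤ a * b :=
  mul_comm b a ▸ mul_le_mul c_le_b (d_le_c.trans (c_le_b.trans b_le_a)) d_nonneg b_nonneg

lemma b_mul_d_le_a_mul_c : b * d ≤ a * c :=
  mul_le_mul b_le_a d_le_c d_nonneg a_nonneg

lemma a_mul_b_mul_c_mul_d : a * b * c * d = k0 ^ 2 := by
  have ha := a_nonneg
  have hb := b_nonneg
  have hc := c_nonneg
  have hd := d_nonneg
  rw [← sq_eq_sq₀ (by positivity) (by positivity)]
  calc (a * b * c * d) ^ 2 = (1 - (ξ ^ 2 + η ^ 2) + (ξ * η) ^ 2) / 16 := by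
        simp only [mul_pow, a_sq, b_sq, c_sq, d_sq]
        ring
    _ = (k0 ^ 2) ^ 2 := by
        rw [ξ_sq_add_η_sq, ξ_mul_η, k0_sq]
        linear_combination -τ_sq / 60

lemma sqrt_three_mul_ab_add_cd : √3 * (a * b + c * d) = τ := by
  have hab : 0 ≤ a * b + c * d :=
    add_nonneg (mul_nonneg a_nonneg b_nonneg) (mul_nonneg c_nonneg d_nonneg)
  have hsq : (a * b + c * d) ^ 2 = (1 + 5 * k0 ^ 2) / 2 := by
    linear_combination b ^ 2 * a_sq + (1 + ξ) / 2 * b_sq + d ^ 2 * c_sq + (1 - η) / 2 * d_sq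
      + 2 * a_mul_b_mul_c_mul_d + ξ_mul_η / 2
  rw [← sq_eq_sq₀ (by positivity) τ_pos.le, mul_pow, hsq, sqrt_three_sq, k0_sq, τ_sq]
  ring

lemma cc_three_mul_ab_sub_cd : cc 3 * (a * b - c * d) = 1 := by
  have hab : 0 ≤ a * b - c * d := sub_nonneg.2 c_mul_d_le_a_mul_b
  have hsq : (a * b - c * d) ^ 2 = (1 - 3 * k0 ^ 2) / 2 := by
    linear_combination b ^ 2 * a_sq + (1 + ξ) / 2 * b_sq + d ^ 2 * c_sq + (1 - η) / 2 * d_sq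
      - 2 * a_mul_b_mul_c_mul_d + ξ_mul_η / 2
  rw [← sq_eq_sq₀ (mul_nonneg cc_three_pos.le hab) one_pos.le, mul_pow, hsq, cc_three_sq, k0_sq]
  linear_combination -τ_sq / 5

lemma cc_nine_mul_ac_add_bd : cc 9 * (a * c + b * d) = 1 := by
  have hac : 0 ≤ a * c + b * d :=
    add_nonneg (mul_nonneg a_nonneg c_nonneg) (mul_nonneg b_nonneg d_nonneg)
  have hsq : (a * c + b * d) ^ 2 = (1 + 3 * k0 ^ 2) / 2 := by
    linear_combination c ^ 2 * a_sq + (1 + ξ) / 2 * c_sq + d ^ 2 * b_sq + (1 + η) / 2 * d_sq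
      + 2 * a_mul_b_mul_c_mul_d - ξ_mul_η / 2
  rw [← sq_eq_sq₀ (mul_nonneg cc_nine_pos.le hac) one_pos.le, mul_pow, hsq, cc_nine_eq, mul_pow,
    cc_three_sq, k0_sq]
  linear_combination (τ ^ 2 + 3 * τ + 1) / 5 * τ_sq

lemma sqrt_three_mul_ac_sub_bd : √3 * (a * c - b * d) = τ - 1 := by
  have hac : 0 ≤ a * c - b * d := sub_nonneg.2 b_mul_d_le_a_mul_c
  have hsq : (a * c - b * d) ^ 2 = (1 - 5 * k0 ^ 2) / 2 := by
    linear_combination c ^ 2 * a_sq + (1 + ξ) / 2 * c_sq + d ^ 2 * b_sq + (1 + η) / 2 * d_sq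
      - 2 * a_mul_b_mul_c_mul_d - ξ_mul_η / 2
  rw [← sq_eq_sq₀ (by positivity) (sub_pos.2 one_lt_τ).le, mul_pow, hsq, sqrt_three_sq, k0_sq]
  linear_combination -τ_sq

lemma ab_cc_one_add_cd_cc_eleven : a * b * cc 1 + c * d * cc 11 = τ := by
  linear_combination (a * b + c * d) / 2 * cc_one_add_cc_eleven
    + (a * b - c * d) / 2 * (cc_one_sub_cc_eleven + cc_nine_eq)
    + τ / 2 * sqrt_three_mul_ab_add_cd + (τ - 1) / 2 * cc_three_mul_ab_sub_cd + τ_sq / 2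

lemma cd_cc_one_add_ab_cc_eleven : c * d * cc 1 + a * b * cc 11 = 1 := by
  linear_combination (a * b + c * d) / 2 * cc_one_add_cc_eleven
    - (a * b - c * d) / 2 * (cc_one_sub_cc_eleven + cc_nine_eq)
    + τ / 2 * sqrt_three_mul_ab_add_cd - (τ - 1) / 2 * cc_three_mul_ab_sub_cd + τ_sq / 2

lemma bd_cc_one_sub_ac_cc_eleven : b * d * cc 1 - a * c * cc 11 = 0 := by
  linear_combination (a * c + b * d) / 2 * cc_one_sub_cc_eleven
    - (a * c - b * d) / 2 * cc_one_add_cc_eleven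
    + cc_nine_mul_ac_add_bd / 2 - τ / 2 * sqrt_three_mul_ac_sub_bd - τ_sq / 2

lemma ac_cc_one_sub_bd_cc_eleven : a * c * cc 1 - b * d * cc 11 = 1 := by
  linear_combination (a * c + b * d) / 2 * cc_one_sub_cc_eleven
    + (a * c - b * d) / 2 * cc_one_add_cc_eleven
    + cc_nine_mul_ac_add_bd / 2 + τ / 2 * sqrt_three_mul_ac_sub_bd + τ_sq / 2

lemma bd_cc_seven_add_ac_cc_thirteen : b * d * cc 7 + a * c * cc 13 = τ - 1 := by
  linear_combination (a * c + b * d) / 2 * (cc_seven_add_cc_thirteen + cc_three_eq)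
    - (a * c - b * d) / 2 * cc_seven_sub_cc_thirteen
    + τ / 2 * cc_nine_mul_ac_add_bd - (τ - 1) / 2 * sqrt_three_mul_ac_sub_bd - τ_sq / 2

lemma ac_cc_seven_add_bd_cc_thirteen : a * c * cc 7 + b * d * cc 13 = 1 := by
  linear_combination (a * c + b * d) / 2 * (cc_seven_add_cc_thirteen + cc_three_eq)
    + (a * c - b * d) / 2 * cc_seven_sub_cc_thirteen
    + τ / 2 * cc_nine_mul_ac_add_bd + (τ - 1) / 2 * sqrt_three_mul_ac_sub_bd + τ_sq / 2

lemma cd_cc_seven_sub_ab_cc_thirteen : c * d * cc 7 - a * b * cc 13 = 0 := by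
  linear_combination (a * b + c * d) / 2 * cc_seven_sub_cc_thirteen
    - (a * b - c * d) / 2 * cc_seven_add_cc_thirteen
    + (τ - 1) / 2 * sqrt_three_mul_ab_add_cd - cc_three_mul_ab_sub_cd / 2 + τ_sq / 2

lemma ab_cc_seven_sub_cd_cc_thirteen : a * b * cc 7 - c * d * cc 13 = 1 := by
  linear_combination (a * b + c * d) / 2 * cc_seven_sub_cc_thirteen
    + (a * b - c * d) / 2 * cc_seven_add_cc_thirteen
    + (τ - 1) / 2 * sqrt_three_mul_ab_add_cd + cc_three_mul_ab_sub_cd / 2 + τ_sq / 2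

/-- The real coordinates of `Aₙ, Dₙ, Eₙ, Hₙ` (as rows) once their common phases are removed. -/
def blackCoords : Matrix (Fin 4) (Fin 4) ℝ :=
  !![r1, r4, r6, r7;
     r4, -r1, r7, -r6;
     r5, r8, -r2, -r3;
     r8, -r5, -r3, r2]

/-- The real coordinates of `Fₙ, Cₙ, Bₙ, Gₙ` (as rows) once their common phases are removed. -/
def whiteCoords : Matrix (Fin 4) (Fin 4) ℝ :=
  !![r6, r7, r4, r1;
     r3, -r2, r5, -r8;
     r2, r3, -r8, -r5;
     r7, -r6, -r1, r4]

/-- The bipartite adjacency matrix of the `E₈` diagram: its rows are the white nodes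
`Fₙ, Cₙ, Bₙ, Gₙ` and its columns the black nodes `Aₙ, Dₙ, Eₙ, Hₙ`. -/
def edges : Matrix (Fin 4) (Fin 4) ℝ :=
  !![1, 0, 0, 0;
     1, 1, 0, 0;
     1, 0, 1, 0;
     0, 0, 1, 1]

lemma r1_sq_add_r4_sq_add_r6_sq_add_r7_sq : r1 ^ 2 + r4 ^ 2 + r6 ^ 2 + r7 ^ 2 = 1 := by
  simp only [r1, r4, r6, r7, div_eq_mul_inv, inv_cc_nine]
  linear_combination (cc 3)⁻¹ ^ 2 * (τ ^ 2 * a_sq_add_d_sq + b_sq_add_c_sq + τ_sq)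
    + inv_cc_three_sq_mul

lemma r2_sq_add_r3_sq_add_r5_sq_add_r8_sq : r2 ^ 2 + r3 ^ 2 + r5 ^ 2 + r8 ^ 2 = 1 := by
  simp only [r2, r3, r5, r8, div_eq_mul_inv, inv_cc_nine]
  linear_combination (cc 3)⁻¹ ^ 2 * (a_sq_add_d_sq + τ ^ 2 * b_sq_add_c_sq + τ_sq)
    + inv_cc_three_sq_mul

lemma r1_mul_r5_add_r4_mul_r8 : r1 * r5 + r4 * r8 = r2 * r6 + r3 * r7 := by
  simp only [r1, r2, r3, r4, r5, r6, r7, r8, div_eq_mul_inv]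
  linear_combination (cc 9)⁻¹ * (cc 3)⁻¹ * (a_sq_add_d_sq - b_sq_add_c_sq)

lemma r1_mul_r8 : r1 * r8 = r4 * r5 := by
  unfold r1 r4 r5 r8
  ring

lemma r2_mul_r7 : r2 * r7 = r3 * r6 := by
  unfold r2 r3 r6 r7
  ring

lemma blackCoords_mul_transpose : blackCoords * blackCoordsᵀ = 1 := by
  ext i j
  fin_cases i <;> fin_cases j <;>
    simp only [blackCoords, Matrix.mul_apply, Matrix.transpose_apply, Fin.sum_univ_four,
      Matrix.of_apply, Matrix.cons_val, Matrix.one_apply, Fin.zero_eta, Fin.mk_one,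
      Fin.reduceFinMk, Fin.reduceEq, if_true, if_false] <;>
    grind [r1_sq_add_r4_sq_add_r6_sq_add_r7_sq, r2_sq_add_r3_sq_add_r5_sq_add_r8_sq,
      r1_mul_r5_add_r4_mul_r8, r1_mul_r8, r2_mul_r7]

lemma whiteCoords_mul_transpose : whiteCoords * whiteCoordsᵀ = 1 := by
  ext i j
  fin_cases i <;> fin_cases j <;>
    simp only [whiteCoords, Matrix.mul_apply, Matrix.transpose_apply, Fin.sum_univ_four,
      Matrix.of_apply, Matrix.cons_val, Matrix.one_apply, Fin.zero_eta, Fin.mk_one,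
      Fin.reduceFinMk, Fin.reduceEq, if_true, if_false] <;>
    grind [r1_sq_add_r4_sq_add_r6_sq_add_r7_sq, r2_sq_add_r3_sq_add_r5_sq_add_r8_sq,
      r1_mul_r5_add_r4_mul_r8, r1_mul_r8, r2_mul_r7]

lemma whiteCoords_mul_diagonal_mul_transpose :
    whiteCoords * Matrix.diagonal ![cc 1, cc 11, cc 7, cc 13] * blackCoordsᵀ = edges := by
  ext i j
  rw [Matrix.mul_apply]
  set q := (cc 3)⁻¹ with hq_def
  have hq : q ^ 2 * (τ + 2) = 1 := inv_cc_three_sq_mul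
  have hτ := τ_sq
  have ab₁ := ab_cc_one_add_cd_cc_eleven
  have bd₇ := bd_cc_seven_add_ac_cc_thirteen
  have bd₁ := bd_cc_one_sub_ac_cc_eleven
  have cd₇ := cd_cc_seven_sub_ab_cc_thirteen
  have ac₁ := ac_cc_one_sub_bd_cc_eleven
  have ab₇ := ab_cc_seven_sub_cd_cc_thirteen
  have cd₁ := cd_cc_one_add_ab_cc_eleven
  have ac₇ := ac_cc_seven_add_bd_cc_thirteen
  fin_cases i <;> fin_cases j <;>
    simp only [whiteCoords, blackCoords, edges, Matrix.mul_diagonal,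
      Matrix.transpose_apply, Fin.sum_univ_four, Matrix.of_apply, Matrix.cons_val, Fin.zero_eta,
      Fin.mk_one, Fin.reduceFinMk, r1, r2, r3, r4, r5, r6, r7, r8, div_eq_mul_inv, inv_cc_nine,
      ← hq_def]
  · linear_combination q ^ 2 * (τ * (ab₁ + bd₇) + 2 * hτ) + hq
  · linear_combination q ^ 2 * τ * (bd₁ + cd₇)
  · linear_combination q ^ 2 * (ab₁ - τ ^ 2 * bd₇ - τ * hτ)
  · linear_combination q ^ 2 * (bd₁ - τ ^ 2 * cd₇)
  · linear_combination q ^ 2 * (τ ^ 2 * ac₁ + ab₇ + hτ) + hq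
  · linear_combination q ^ 2 * (τ ^ 2 * cd₁ + ac₇ + hτ) + hq
  · linear_combination q ^ 2 * τ * (ac₁ - ab₇)
  · linear_combination q ^ 2 * τ * (cd₁ - ac₇)
  · linear_combination q ^ 2 * (τ ^ 2 * ab₁ - bd₇ + (τ + 1) * hτ) + hq
  · linear_combination q ^ 2 * (τ ^ 2 * bd₁ - cd₇)
  · linear_combination q ^ 2 * (τ * (ab₁ + bd₇) + 2 * hτ) + hq
  · linear_combination q ^ 2 * τ * (bd₁ + cd₇)
  · linear_combination q ^ 2 * τ * (ac₁ - ab₇)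
  · linear_combination q ^ 2 * τ * (cd₁ - ac₇)
  · linear_combination q ^ 2 * (ac₁ + τ ^ 2 * ab₇ + hτ) + hq
  · linear_combination q ^ 2 * (cd₁ + τ ^ 2 * ac₇ + hτ) + hq

/-- The vector of `ℂ⁴` with real coordinates `v`, rotated in the `i`-th coordinate by `ω ^ e i`. -/
def phased (e : Fin 4 → ℕ) (v : Fin 4 → ℝ) : Fin 4 → ℂ := fun i ↦ v i * ω ^ e i

lemma ω_pow (m : ℕ) : ω ^ m = Complex.exp ((m * π / 30 : ℝ) * I) := by
  rw [ω, ← Complex.exp_nat_mul]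
  push_cast
  ring_nf

lemma re_ω_pow_mul_star_ω_pow (m k : ℕ) : (ω ^ m * star (ω ^ k)).re = cc (m - k) / 2 := by
  rw [ω_pow, ω_pow, cc, Int.cast_sub, Int.cast_natCast, Int.cast_natCast, sub_mul, sub_div,
    Real.cos_sub]
  simp only [Complex.mul_re, Complex.star_def, Complex.conj_re, Complex.conj_im,
    Complex.exp_ofReal_mul_I_re, Complex.exp_ofReal_mul_I_im]
  ring

lemma rinner_phased (e f : Fin 4 → ℕ) (v w : Fin 4 → ℝ) :
    rinner (phased e v) (phased f w) = (∑ i, v i * w i * cc (e i - f i)) / 2 := by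
  rw [rinner, Complex.re_sum, Finset.sum_div]
  refine Finset.sum_congr rfl fun i _ ↦ ?_
  have hreal : phased e v i * star (phased f w i)
      = (v i * w i : ℝ) * (ω ^ e i * star (ω ^ f i)) := by
    simp only [phased, star_mul', Complex.star_def, Complex.conj_ofReal, Complex.ofReal_mul]
    ring
  rw [hreal, Complex.re_ofReal_mul, re_ω_pow_mul_star_ω_pow, mul_div_assoc]

lemma rinner_phased_self (e : Fin 4 → ℕ) (v w : Fin 4 → ℝ) :
    rinner (phased e v) (phased e w) = v ⬝ᵥ w := by
  simp [rinner_phased, cc_zero, dotProduct, ← Finset.sum_mul]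

lemma rinner_comm (v w : Fin 4 → ℂ) : rinner v w = rinner w v := by
  rw [rinner, rinner, ← Complex.conj_re, map_sum]
  simp only [map_mul, Complex.star_def, Complex.conj_conj, mul_comm]

/-- The black nodes `Aₙ, Dₙ, Eₙ, Hₙ` of the `E₈` diagram, which share their phases. -/
def black (n : Fin 30) (i : Fin 4) : Fin 4 → ℂ :=
  phased ![2 * n, 22 * n, 14 * n + 1, 26 * n + 1] (blackCoords i)

/-- The white nodes `Fₙ, Cₙ, Bₙ, Gₙ` of the `E₈` diagram, which share their phases. -/
def white (n : Fin 30) (i : Fin 4) : Fin 4 → ℂ :=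
  phased ![2 * n + 29, 22 * n + 19, 14 * n + 24, 26 * n + 18] (whiteCoords i)

lemma rinner_black (n : Fin 30) (i j : Fin 4) :
    rinner (black n i) (black n j) = (1 : Matrix (Fin 4) (Fin 4) ℝ) i j := by
  rw [black, black, rinner_phased_self, ← blackCoords_mul_transpose]
  rfl

lemma rinner_white (n : Fin 30) (i j : Fin 4) :
    rinner (white n i) (white n j) = (1 : Matrix (Fin 4) (Fin 4) ℝ) i j := by
  rw [white, white, rinner_phased_self, ← whiteCoords_mul_transpose]
  rfl

lemma rinner_white_black (n : Fin 30) (i j : Fin 4) :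
    rinner (white n i) (black n j) = -(1 / 2) * edges i j := by
  have h29 : cc 29 = -cc 1 := cc_thirty_sub 1
  have h19 : cc 19 = -cc 11 := cc_thirty_sub 11
  have h23 : cc 23 = -cc 7 := cc_thirty_sub 7
  have h17 : cc 17 = -cc 13 := cc_thirty_sub 13
  rw [white, black, rinner_phased, ← whiteCoords_mul_diagonal_mul_transpose, Matrix.mul_apply]
  simp only [Fin.sum_univ_four, Matrix.mul_diagonal, Matrix.transpose_apply, Matrix.cons_val,
    Nat.cast_add, Nat.cast_mul, Nat.cast_ofNat, Nat.cast_one, add_sub_cancel_left,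
    add_sub_add_left_eq_sub, Int.reduceSub, h29, h19, h23, h17]
  ring

/-- Position of the `i`-th simple root among the white (`inl`) or black (`inr`) nodes. -/
def colour : Fin 8 → Fin 4 ⊕ Fin 4 :=
  ![.inl 0, .inr 0, .inl 1, .inr 1, .inl 2, .inr 2, .inl 3, .inr 3]

lemma simple_eq_colour (n : Fin 30) (i : Fin 8) :
    simple n i = Sum.elim (white n) (black n) (colour i) := by
  fin_cases i <;> ext k <;> fin_cases k <;>
    simp [simple, colour, white, black, phased, whiteCoords, blackCoords, A, B, C, D, E, F, G, H]

lemma G8_eq_fromBlocks (i j : Fin 8) :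
    G8 i j = Matrix.fromBlocks 1 (-(1 / 2 : ℝ) • edges) (-(1 / 2 : ℝ) • edges)ᵀ 1
      (colour i) (colour j) := by
  fin_cases i <;> fin_cases j <;> simp [G8, colour, edges]

lemma rinner_simple (n : Fin 30) (i j : Fin 8) : rinner (simple n i) (simple n j) = G8 i j := by
  rw [simple_eq_colour, simple_eq_colour, G8_eq_fromBlocks]
  rcases colour i with i | i <;> rcases colour j with j | j
  · exact rinner_white n i j
  · exact rinner_white_black n i j
  · exact (rinner_comm _ _).trans (rinner_white_black n j i)
  · exact rinner_black n i j

/-- The position of the `i`-th entry of `(Fₙ, Aₙ, Cₙ, Dₙ, Bₙ, Eₙ, Gₙ, Hₙ)` in the numbering of the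
`E₈` diagram used by `CartanMatrix.E₈` (Bourbaki's, counted from `0`). -/
def bourbaki : Equiv.Perm (Fin 8) where
  toFun := ![1, 3, 2, 0, 4, 5, 6, 7]
  invFun := ![3, 0, 2, 1, 4, 5, 6, 7]
  left_inv := by decide
  right_inv := by decide

lemma G8_eq_half_cartanMatrix (i j : Fin 8) :
    G8 i j = (CartanMatrix.E₈ (bourbaki i) (bourbaki j) : ℝ) / 2 := by
  fin_cases i <;> fin_cases j <;>
    simp only [G8, CartanMatrix.E₈, bourbaki, Equiv.coe_fn_mk, Matrix.of_apply, Matrix.cons_val,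
      Fin.zero_eta, Fin.mk_one, Fin.reduceFinMk] <;>
    norm_num

/-- for each n, the eight vectors form a system of simple roots of
type E₈: their Gram matrix is G8, which is one half of a Cartan matrix of type E₈. -/
theorem stmt11 :
    (∀ n : Fin 30, ∀ i j : Fin 8, rinner (simple n i) (simple n j) = G8 i j) ∧
    (∃ σ : Equiv.Perm (Fin 8), ∀ i j : Fin 8,
      G8 i j = (CartanMatrix.E₈ (σ i) (σ j) : ℝ) / 2) :=
  ⟨rinner_simple, bourbaki, G8_eq_half_cartanMatrix⟩

end Triacontagonal
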